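/- For every GLD-lattice A there exist a unary operation B on the powerset of the set of GLD-filters of A and a map f from A to this powerset such that: (i) the powerset Boolean algebra of the set of GLD-filters, equipped with B, is a GL-algebra (B(univ) = univ, B(X ∩ Y) = B(X) ∩ B(Y), and B((B X)ᶜ ∪ X) ⊆ B X for all X, Y); and (ii) f is injective and satisfies f(⊥) = ∅, f(⊤) = univ, f(x ⊔ y) = f(x) ∪ f(y), f(x ⊓ y) = f(x) ∩ f(y), f(□x) = B(f(x)), and f(◇x) = (B((f(x))ᶜ))ᶜ for all x, y ∈ A. -/

import Mathlib

/-!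
The embedding is `eta` and the operator is the one induced by the canonical neighborhoods:
`B X = {F | X ∈ N F}`, where `N F` is the filter of sets generated by the `eta x` with
`□x ∈ F` and the complements of the `eta y` with `◇y ∉ F`.

The two limit axioms, together with the prime ideal theorem, show that GLD-filters separate
points (`exists_gldFilter`): `eta a ∩ (eta b)ᶜ` is empty only if `a ≤ b`. So an inclusion
between the sets generating `N F` is an inequality in `A`, and the two axioms
linking `□` and `◇` turn it into the statement that `eta` commutes with both modalities.

Transitivity of `□` and `◇` gives `B X ⊆ B (B X)`, and Löb's law then follows by induction on the
`n` with `□ⁿ⊥ ∈ F`, since `□ⁿ⁺¹⊥ ∈ F` puts the filters containing `□ⁿ⊥` in `N F`.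
-/

/-- A GLD-lattice structure on a bounded distributive lattice `A`, given by the
modal operations `box` and `dia`. -/
structure IsGLDLattice {A : Type*} [DistribLattice A] [BoundedOrder A]
    (box dia : A → A) : Prop where
  box_top : box ⊤ = ⊤
  dia_bot : dia ⊥ = ⊥
  box_sup_le : ∀ x y : A, box (x ⊔ y) ≤ box x ⊔ dia y
  inf_dia_le : ∀ x y : A, box x ⊓ dia y ≤ dia (x ⊓ y)
  dia_sup : ∀ x y : A, dia (x ⊔ y) = dia x ⊔ dia y
  box_inf : ∀ x y : A, box (x ⊓ y) = box x ⊓ box y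
  dia_dia_le : ∀ x : A, dia (dia x) ≤ dia x
  box_le_box_box : ∀ x : A, box x ≤ box (box x)
  isLUB_inf_boxIter : ∀ x : A, IsLUB {y : A | ∃ n : ℕ, y = x ⊓ box^[n] ⊥} x
  isGLB_sup_diaIter : ∀ x : A, IsGLB {y : A | ∃ n : ℕ, y = x ⊔ dia^[n] ⊤} x

/-- A GLD-filter of `A`: a prime filter `F` such that for some `n`,
`◇ⁿ⊤ ∉ F` and `□ⁿ⊥ ∈ F`. -/
structure IsGLDFilter {A : Type*} [DistribLattice A] [BoundedOrder A]
    (box dia : A → A) (F : Set A) : Prop where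
  nonempty : F.Nonempty
  mem_of_le : ∀ x y : A, x ∈ F → x ≤ y → y ∈ F
  inf_mem : ∀ x y : A, x ∈ F → y ∈ F → x ⊓ y ∈ F
  bot_not_mem : ⊥ ∉ F
  prime : ∀ x y : A, x ⊔ y ∈ F → x ∈ F ∨ y ∈ F
  gld : ∃ n : ℕ, dia^[n] ⊤ ∉ F ∧ box^[n] ⊥ ∈ F

/-- The type of GLD-filters of `A`. -/
def GLDFilter (A : Type*) [DistribLattice A] [BoundedOrder A] (box dia : A → A) :=
  {F : Set A // IsGLDFilter box dia F}

/-- `eta x` is the set of GLD-filters containing `x`. -/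
def eta {A : Type*} [DistribLattice A] [BoundedOrder A] (box dia : A → A)
    (x : A) : Set (GLDFilter A box dia) :=
  {F | x ∈ F.1}

/-- A GLD-filter frame of `A`: each `N F` is a filter of the powerset of the
set of GLD-filters, and the neighborhood conditions relating `N` to `box`,
`dia` and `eta` hold. -/
structure IsGLDFilterFrame {A : Type*} [DistribLattice A] [BoundedOrder A]
    (box dia : A → A)
    (N : GLDFilter A box dia → Set (Set (GLDFilter A box dia))) : Prop where
  nonempty : ∀ F, (N F).Nonempty
  mem_of_subset : ∀ F, ∀ X Y : Set (GLDFilter A box dia),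
    X ∈ N F → X ⊆ Y → Y ∈ N F
  inter_mem : ∀ F, ∀ X Y : Set (GLDFilter A box dia),
    X ∈ N F → Y ∈ N F → X ∩ Y ∈ N F
  eta_mem : ∀ F x, box x ∈ F.1 → eta box dia x ∈ N F
  compl_eta_mem : ∀ F x, dia x ∉ F.1 → (eta box dia x)ᶜ ∈ N F
  eta_not_mem : ∀ F x, box x ∉ F.1 → eta box dia x ∉ N F
  compl_eta_not_mem : ∀ F x, dia x ∈ F.1 → (eta box dia x)ᶜ ∉ N F

/-- The box operator on the powerset of the set of GLD-filters induced by a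
neighborhood map `N`. -/
def boxZ {A : Type*} [DistribLattice A] [BoundedOrder A] (box dia : A → A)
    (N : GLDFilter A box dia → Set (Set (GLDFilter A box dia))) :
    Set (GLDFilter A box dia) → Set (GLDFilter A box dia) :=
  fun X => {F | X ∈ N F}

/-- The diamond operator induced by a neighborhood map `N`. -/
def diaZ {A : Type*} [DistribLattice A] [BoundedOrder A] (box dia : A → A)
    (N : GLDFilter A box dia → Set (Set (GLDFilter A box dia))) :
    Set (GLDFilter A box dia) → Set (GLDFilter A box dia) :=
  fun X => (boxZ box dia N Xᶜ)ᶜ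

/-- The canonical neighborhood map of a GLD-lattice. -/
def canonN {A : Type*} [DistribLattice A] [BoundedOrder A] (box dia : A → A)
    (F : GLDFilter A box dia) : Set (Set (GLDFilter A box dia)) :=
  {X | ∃ x y : A, box x ∈ F.1 ∧ dia y ∉ F.1 ∧
    eta box dia x ∩ (eta box dia y)ᶜ ⊆ X}

section GLDEmbedding

variable {A : Type*} [DistribLattice A] [BoundedOrder A] {box dia : A → A}

lemma IsGLDLattice.box_mono (h : IsGLDLattice box dia) : Monotone box := by
  intro x y hxy
  rw [← inf_eq_left.2 hxy, h.box_inf]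
  exact inf_le_right

lemma IsGLDLattice.dia_mono (h : IsGLDLattice box dia) : Monotone dia := by
  intro x y hxy
  rw [← sup_eq_right.2 hxy, h.dia_sup]
  exact le_sup_left

lemma top_mem (F : GLDFilter A box dia) : (⊤ : A) ∈ F.1 := by
  obtain ⟨x, hx⟩ := F.2.nonempty
  exact F.2.mem_of_le x ⊤ hx le_top

/-- GLD-filters separate points. The limit axioms give `n` with `a ⊓ □ⁿ⊥ ≰ b ⊔ ◇ⁿ⊤`, and a prime
filter separating these two elements is automatically a GLD-filter. -/
lemma exists_gldFilter (h : IsGLDLattice box dia) {a b : A} (hab : ¬ a ≤ b) :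
    ∃ F : GLDFilter A box dia, a ∈ F.1 ∧ b ∉ F.1 := by
  obtain ⟨n, hn⟩ : ∃ n : ℕ, ¬ a ⊓ box^[n] ⊥ ≤ b := by
    by_contra! hc
    apply hab
    apply (h.isLUB_inf_boxIter a).2
    rintro _ ⟨n, rfl⟩
    exact hc n
  obtain ⟨m, hm⟩ : ∃ m : ℕ, ¬ a ⊓ box^[n] ⊥ ≤ b ⊔ dia^[m] ⊤ := by
    by_contra! hc
    apply hn
    apply (h.isGLB_sup_diaIter b).2
    rintro _ ⟨m, rfl⟩
    exact hc m
  have hbox : box^[n] ⊥ ≤ box^[max n m] ⊥ :=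
    h.box_mono.monotone_iterate_of_le_map bot_le (le_max_left n m)
  have hdia : dia^[max n m] ⊤ ≤ dia^[m] ⊤ :=
    h.dia_mono.antitone_iterate_of_map_le le_top (le_max_right n m)
  have hk : ¬ a ⊓ box^[max n m] ⊥ ≤ b ⊔ dia^[max n m] ⊤ := fun hc =>
    hm ((inf_le_inf_left a hbox).trans (hc.trans (sup_le_sup_left hdia b)))
  generalize max n m = k at hk
  obtain ⟨J, hJ, hIJ, hFJ⟩ := DistribLattice.prime_ideal_of_disjoint_filter_ideal
    (F := Order.PFilter.principal (a ⊓ box^[k] ⊥))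
    (I := Order.Ideal.principal (b ⊔ dia^[k] ⊤)) (by
      rw [Set.disjoint_left]
      intro x hx hx'
      exact hk (le_trans (Order.PFilter.mem_principal.1 hx) (Order.Ideal.mem_principal.1 hx')))
  have hlow : a ⊓ box^[k] ⊥ ∉ J := fun hc =>
    Set.disjoint_left.1 hFJ (Order.PFilter.mem_principal.2 le_rfl) hc
  have hup : b ⊔ dia^[k] ⊤ ∈ J := hIJ (Order.Ideal.mem_principal.2 le_rfl)
  refine ⟨⟨{x | x ∉ J}, ?_⟩, ?_, ?_⟩
  · refine ⟨⟨_, hlow⟩, ?_, ?_, ?_, ?_, k, ?_, ?_⟩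
    · intro x y hx hxy hy
      exact hx (J.lower hxy hy)
    · intro x y hx hy hxy
      exact (hJ.mem_or_mem hxy).elim hx hy
    · intro hc
      exact hc J.bot_mem
    · intro x y hxy
      by_contra! hc
      simp only [Set.mem_ofPred_eq, not_not] at hc
      exact hxy (Order.Ideal.sup_mem hc.1 hc.2)
    · intro hc
      exact hc (J.lower le_sup_right hup)
    · intro hc
      exact hlow (J.lower inf_le_right hc)
  · intro hc
    exact hlow (J.lower inf_le_left hc)
  · intro hc
    exact hc (J.lower le_sup_left hup)

lemma le_of_forall_gldFilter (h : IsGLDLattice box dia) {a b : A}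
    (hF : ∀ F : GLDFilter A box dia, a ∈ F.1 → b ∈ F.1) : a ≤ b := by
  by_contra hab
  obtain ⟨F, ha, hb⟩ := exists_gldFilter h hab
  exact hb (hF F ha)

lemma eta_sup (x y : A) : eta box dia (x ⊔ y) = eta box dia x ∪ eta box dia y := by
  ext F
  exact ⟨F.2.prime x y, fun hF => hF.elim (fun hx => F.2.mem_of_le _ _ hx le_sup_left)
    fun hy => F.2.mem_of_le _ _ hy le_sup_right⟩

lemma eta_inf (x y : A) : eta box dia (x ⊓ y) = eta box dia x ∩ eta box dia y := by
  ext F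
  exact ⟨fun hF => ⟨F.2.mem_of_le _ _ hF inf_le_left, F.2.mem_of_le _ _ hF inf_le_right⟩,
    fun hF => F.2.inf_mem _ _ hF.1 hF.2⟩

lemma canonN_isGLDFilterFrame (h : IsGLDLattice box dia) :
    IsGLDFilterFrame box dia (canonN box dia) := by
  have htop : ∀ F : GLDFilter A box dia, box ⊤ ∈ F.1 := fun F => by
    rw [h.box_top]
    exact top_mem F
  have hbot : ∀ F : GLDFilter A box dia, dia ⊥ ∉ F.1 := fun F => by
    rw [h.dia_bot]
    exact F.2.bot_not_mem
  refine ⟨?_, ?_, ?_, ?_, ?_, ?_, ?_⟩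
  · intro F
    exact ⟨Set.univ, ⊤, ⊥, htop F, hbot F, Set.subset_univ _⟩
  · rintro F X Y ⟨x, y, hx, hy, hX⟩ hXY
    exact ⟨x, y, hx, hy, hX.trans hXY⟩
  · rintro F X Y ⟨x, y, hx, hy, hX⟩ ⟨x', y', hx', hy', hY⟩
    refine ⟨x ⊓ x', y ⊔ y', ?_, ?_, ?_⟩
    · rw [h.box_inf]
      exact F.2.inf_mem _ _ hx hx'
    · rw [h.dia_sup]
      intro hc
      exact (F.2.prime _ _ hc).elim hy hy'
    · rw [eta_inf, eta_sup]
      rintro G ⟨⟨hGx, hGx'⟩, hG⟩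
      exact ⟨hX ⟨hGx, fun hc => hG (Or.inl hc)⟩, hY ⟨hGx', fun hc => hG (Or.inr hc)⟩⟩
  · intro F x hx
    exact ⟨x, ⊥, hx, hbot F, Set.inter_subset_left⟩
  · intro F y hy
    exact ⟨⊤, y, htop F, hy, Set.inter_subset_right⟩
  · rintro F z hz ⟨x, y, hx, hy, hX⟩
    have hle : x ≤ z ⊔ y := le_of_forall_gldFilter h fun G hG => by
      by_cases hGy : y ∈ G.1
      · exact G.2.mem_of_le _ _ hGy le_sup_right
      · exact G.2.mem_of_le _ _ (hX ⟨hG, hGy⟩) le_sup_left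
    exact (F.2.prime _ _ (F.2.mem_of_le _ _ hx
      ((h.box_mono hle).trans (h.box_sup_le z y)))).elim hz hy
  · rintro F z hz ⟨x, y, hx, hy, hX⟩
    have hle : x ⊓ z ≤ y := le_of_forall_gldFilter h fun G hG => by
      by_contra hGy
      exact hX ⟨G.2.mem_of_le _ _ hG inf_le_left, hGy⟩ (G.2.mem_of_le _ _ hG inf_le_right)
    exact hy (F.2.mem_of_le _ _ (F.2.inf_mem _ _ hx hz)
      ((h.inf_dia_le x z).trans (h.dia_mono hle)))

/-- The modal axiom 4 for the canonical operator: if `eta x ∩ (eta y)ᶜ` witnesses `X ∈ N F`, then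
`eta (□x) ∩ (eta (◇y))ᶜ` witnesses `B X ∈ N F`. -/
lemma boxZ_mem_canonN (h : IsGLDLattice box dia) {F : GLDFilter A box dia}
    {X : Set (GLDFilter A box dia)} (hX : X ∈ canonN box dia F) :
    boxZ box dia (canonN box dia) X ∈ canonN box dia F := by
  obtain ⟨x, y, hx, hy, hXY⟩ := hX
  refine ⟨box x, dia y, F.2.mem_of_le _ _ hx (h.box_le_box_box x),
    fun hc => hy (F.2.mem_of_le _ _ hc (h.dia_dia_le y)), ?_⟩
  rintro G ⟨hGx, hGy⟩
  exact ⟨x, y, hGx, hGy, hXY⟩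

/-- Löb's law, by induction on the `n` with `□ⁿ⊥ ∈ F`. -/
lemma loeb_canonN (h : IsGLDLattice box dia) (X : Set (GLDFilter A box dia)) (n : ℕ) :
    ∀ F : GLDFilter A box dia, box^[n] ⊥ ∈ F.1 →
      (boxZ box dia (canonN box dia) X)ᶜ ∪ X ∈ canonN box dia F → X ∈ canonN box dia F := by
  have hN := canonN_isGLDFilterFrame h
  induction n with
  | zero => exact fun F hF => absurd hF F.2.bot_not_mem
  | succ n ih =>
    intro F hF hW
    rw [Function.iterate_succ_apply'] at hF
    -- By induction, `B W ⊆ B X` on the filters containing `□ⁿ⊥`, where `W = (B X)ᶜ ∪ X`.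
    have hBX : boxZ box dia (canonN box dia) X ∈ canonN box dia F :=
      hN.mem_of_subset F _ _ (hN.inter_mem F _ _ (hN.eta_mem F _ hF) (boxZ_mem_canonN h hW))
        fun G hG => ih G hG.1 hG.2
    exact hN.mem_of_subset F _ _ (hN.inter_mem F _ _ hW hBX)
      fun G hG => hG.1.resolve_left fun hc => hc hG.2

end GLDEmbedding

/-- For every GLD-lattice `A` there exist an operator `B` on the powerset of
the set of GLD-filters making it a GL-algebra, and an injective homomorphism
`f` of modal distributive lattices from `A` into that GL-algebra. -/
theorem stmt8 {A : Type*} [DistribLattice A] [BoundedOrder A] (box dia : A → A)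
    (h : IsGLDLattice box dia) :
    ∃ (B : Set (GLDFilter A box dia) → Set (GLDFilter A box dia))
      (f : A → Set (GLDFilter A box dia)),
      (B Set.univ = Set.univ ∧
       (∀ X Y : Set (GLDFilter A box dia), B (X ∩ Y) = B X ∩ B Y) ∧
       (∀ X : Set (GLDFilter A box dia), B ((B X)ᶜ ∪ X) ⊆ B X)) ∧
      Function.Injective f ∧
      f (⊥ : A) = ∅ ∧
      f (⊤ : A) = Set.univ ∧
      (∀ x y : A, f (x ⊔ y) = f x ∪ f y) ∧
      (∀ x y : A, f (x ⊓ y) = f x ∩ f y) ∧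
      (∀ x : A, f (box x) = B (f x)) ∧
      (∀ x : A, f (dia x) = (B (f x)ᶜ)ᶜ) := by
  have hN := canonN_isGLDFilterFrame h
  refine ⟨boxZ box dia (canonN box dia), eta box dia, ⟨?_, ?_, ?_⟩, ?_, ?_, ?_, eta_sup, eta_inf,
    ?_, ?_⟩
  · refine Set.eq_univ_of_forall fun F => ?_
    obtain ⟨X, hX⟩ := hN.nonempty F
    exact hN.mem_of_subset F X _ hX (Set.subset_univ X)
  · intro X Y
    ext F
    exact ⟨fun hF => ⟨hN.mem_of_subset F _ _ hF Set.inter_subset_left,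
      hN.mem_of_subset F _ _ hF Set.inter_subset_right⟩, fun hF => hN.inter_mem F _ _ hF.1 hF.2⟩
  · intro X F hF
    obtain ⟨n, -, hn⟩ := F.2.gld
    exact loeb_canonN h X n F hn hF
  · intro a b hab
    exact le_antisymm (le_of_forall_gldFilter h fun F => (Set.ext_iff.1 hab F).1)
      (le_of_forall_gldFilter h fun F => (Set.ext_iff.1 hab F).2)
  · exact Set.eq_empty_of_forall_notMem fun F => F.2.bot_not_mem
  · exact Set.eq_univ_of_forall top_mem
  · intro x
    ext F
    exact ⟨hN.eta_mem F x, fun hF => by_contra fun hc => hN.eta_not_mem F x hc hF⟩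
  · intro x
    ext F
    exact ⟨hN.compl_eta_not_mem F x, fun hF => by_contra fun hc => hF (hN.compl_eta_mem F x hc)⟩
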